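/- Let T be finite, say T = {1,…,m} (so the parameter space C(T,ℝ) is ℝᵐ with the max norm). Then the global Hoffman constant Hof F := sup_{b ∈ dom F, x ∈ ℝⁿ} d(x,F(b))/d(b,F⁻¹(x)) satisfies Hof F = max { d_*(0ₙ, conv{a_t : t ∈ J})⁻¹ : J ⊆ T and 0ₙ ∉ conv{a_t : t ∈ J} }, where conv denotes the convex hull. -/

import Mathlib

open Filter Set EMetric
open scoped Topology ENNReal NNReal

/-- The feasible set `F(b) = {x ∈ ℝⁿ : aₜ'x ≤ bₜ, t = 1,…,m}` of a finite linear
inequality system. -/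
def feas {n m : ℕ} (a : Fin m → (Fin n → ℝ)) (b : Fin m → ℝ) : Set (Fin n → ℝ) :=
  {x | ∀ t : Fin m, (∑ i, a t i * x i) ≤ b t}

/-- Distance (in `[0,+∞]`, with `d(z,∅) = +∞`) from `z` to `S ⊆ ℝⁿ` with respect to the
norm `p` on `ℝⁿ`. -/
noncomputable def pDist {n : ℕ} (p : Seminorm ℝ (Fin n → ℝ))
    (z : Fin n → ℝ) (S : Set (Fin n → ℝ)) : ℝ≥0∞ :=
  ⨅ s ∈ S, ENNReal.ofReal (p (z - s))

/-- The dual norm `‖u‖_* = sup_{p(x) ≤ 1} |u'x|` of `u ∈ ℝⁿ`, valued in `[0,+∞]`. -/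
noncomputable def dualNorm {n : ℕ} (p : Seminorm ℝ (Fin n → ℝ)) (u : Fin n → ℝ) : ℝ≥0∞ :=
  ⨆ (x : Fin n → ℝ) (_ : p x ≤ 1), ENNReal.ofReal |∑ i, u i * x i|

/-- The dual distance `d_*(0ₙ, S) = inf_{u ∈ S} ‖u‖_*`, valued in `[0,+∞]` (`= +∞` if `S = ∅`). -/
noncomputable def dualDist0 {n : ℕ} (p : Seminorm ℝ (Fin n → ℝ)) (S : Set (Fin n → ℝ)) : ℝ≥0∞ :=
  ⨅ u ∈ S, dualNorm p u

/-- A norm on `ℝⁿ` dominates a positive multiple of the sup norm. -/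
theorem Seminorm.exists_pos_mul_norm_le {n : ℕ} (p : Seminorm ℝ (Fin n → ℝ))
    (hp : ∀ x, p x = 0 → x = 0) (hcont : Continuous p) :
    ∃ c : ℝ, 0 < c ∧ ∀ x, c * ‖x‖ ≤ p x := by
  rcases (Metric.sphere (0 : Fin n → ℝ) 1).eq_empty_or_nonempty with hE | hne
  · refine ⟨1, one_pos, fun x => ?_⟩
    by_cases hx : x = 0
    · simp [hx]
    · have : ‖x‖⁻¹ • x ∈ Metric.sphere (0 : Fin n → ℝ) 1 := by
        simp [norm_smul, hx]
      simp [hE] at this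
  · obtain ⟨z, hz, hmin⟩ := (isCompact_sphere (0 : Fin n → ℝ) 1).exists_isMinOn hne
      hcont.continuousOn
    have hz0 : z ≠ 0 := by
      rintro rfl
      simp at hz
    refine ⟨p z, (apply_nonneg p z).lt_of_ne fun h => hz0 (hp z h.symm), fun x => ?_⟩
    by_cases hx : x = 0
    · simp [hx]
    · have hmem : ‖x‖⁻¹ • x ∈ Metric.sphere (0 : Fin n → ℝ) 1 := by
        simp [norm_smul, hx]
      have h : p z ≤ p (‖x‖⁻¹ • x) := hmin hmem
      rw [map_smul_eq_mul, norm_inv, norm_norm] at h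
      have hpos : 0 < ‖x‖ := norm_pos_iff.2 hx
      rwa [inv_mul_eq_div, le_div_iff₀ hpos] at h

/-- Closed balls of a norm on `ℝⁿ` are compact. -/
theorem Seminorm.isCompact_closedBall_of_eq_zero {n : ℕ} (p : Seminorm ℝ (Fin n → ℝ))
    (hp : ∀ x, p x = 0 → x = 0) (x : Fin n → ℝ) (δ : ℝ) : IsCompact (p.closedBall x δ) := by
  have hcont : Continuous p :=
    continuousOn_univ.1 (p.convexOn.continuousOn isOpen_univ)
  obtain ⟨c, hc, hle⟩ := p.exists_pos_mul_norm_le hp hcont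
  refine (isCompact_closedBall x (δ / c)).of_isClosed_subset ?_ fun y hy => ?_
  · have : p.closedBall x δ = (fun y => p (y - x)) ⁻¹' Iic δ := by
      ext y
      simp [Seminorm.mem_closedBall]
    rw [this]
    exact isClosed_Iic.preimage (by fun_prop)
  · rw [Seminorm.mem_closedBall] at hy
    rw [mem_closedBall_iff_norm, le_div_iff₀ hc, mul_comm]
    exact (hle _).trans hy

/-- A point of the convex hull of a finite family is a convex combination of its members. -/
theorem exists_weights_of_mem_convexHull_image {n m : ℕ} (a : Fin m → (Fin n → ℝ))
    (J : Set (Fin m)) {u : Fin n → ℝ} (hu : u ∈ convexHull ℝ (a '' J)) :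
    ∃ μ : Fin m → ℝ, (∀ t, 0 ≤ μ t) ∧ (∀ t ∉ J, μ t = 0) ∧ ∑ t, μ t = 1 ∧
      ∑ t, μ t • a t = u := by
  classical
  refine convexHull_min (t := {u | ∃ μ : Fin m → ℝ, (∀ t, 0 ≤ μ t) ∧ (∀ t ∉ J, μ t = 0) ∧
    ∑ t, μ t = 1 ∧ ∑ t, μ t • a t = u}) ?_ ?_ hu
  · rintro _ ⟨t, ht, rfl⟩
    refine ⟨Pi.single t 1, fun s => ?_, fun s hs => ?_, ?_, ?_⟩
    · by_cases h : s = t <;> simp [h]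
    · have h : s ≠ t := fun h => hs (h ▸ ht)
      simp [h]
    · simp
    · simp [Pi.single_apply]
  · rintro _ ⟨μ, h0, hJ, h1, rfl⟩ _ ⟨ν, k0, kJ, k1, rfl⟩ α β hα hβ hαβ
    refine ⟨α • μ + β • ν, fun t => ?_, fun t ht => ?_, ?_, ?_⟩
    · have := h0 t
      have := k0 t
      simp only [Pi.add_apply, Pi.smul_apply, smul_eq_mul]
      positivity
    · simp [hJ t ht, kJ t ht]
    · simp [Finset.sum_add_distrib, ← Finset.mul_sum, h1, k1, hαβ]
    · simp [add_smul, Finset.sum_add_distrib, Finset.smul_sum, mul_smul]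

/-- A nonnegative combination can be rewritten, without decreasing a linear objective that is
nonpositive on nonnegative relations, so that `0` is not in the convex hull of the vectors used. -/
theorem exists_weights_zero_notMem_convexHull {n m : ℕ} (a : Fin m → (Fin n → ℝ)) (c : Fin m → ℝ)
    (hc : ∀ μ : Fin m → ℝ, (∀ t, 0 ≤ μ t) → ∑ t, μ t • a t = 0 → ∑ t, μ t * c t ≤ 0)
    (w : Fin m → ℝ) (hw : ∀ t, 0 ≤ w t) :
    ∃ v : Fin m → ℝ, (∀ t, 0 ≤ v t) ∧ ∑ t, v t • a t = ∑ t, w t • a t ∧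
      ∑ t, w t * c t ≤ ∑ t, v t * c t ∧ (0 : Fin n → ℝ) ∉ convexHull ℝ (a '' {t | v t ≠ 0}) := by
  induction hk : (Finset.univ.filter fun t => w t ≠ 0).card using Nat.strong_induction_on
    generalizing w with
  | _ k ih =>
  by_cases h0 : (0 : Fin n → ℝ) ∈ convexHull ℝ (a '' {t | w t ≠ 0})
  swap
  · exact ⟨w, hw, rfl, le_rfl, h0⟩
  obtain ⟨μ, hμ0, hμJ, hμ1, hμa⟩ := exists_weights_of_mem_convexHull_image a _ h0
  obtain ⟨t₀, ht₀, hmin⟩ := (Finset.univ.filter fun t => 0 < μ t).exists_min_image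
    (fun t => w t / μ t) <| by
      by_contra hne
      rw [Finset.not_nonempty_iff_eq_empty, Finset.filter_eq_empty_iff] at hne
      have : ∑ t, μ t ≤ 0 := Finset.sum_nonpos fun t _ => not_lt.1 (hne (Finset.mem_univ t))
      linarith
  simp only [Finset.mem_filter, Finset.mem_univ, true_and] at ht₀ hmin
  set s := w t₀ / μ t₀ with hs
  have hs0 : 0 ≤ s := div_nonneg (hw _) ht₀.le
  have hnonneg : ∀ t, 0 ≤ w t - s * μ t := fun t => by
    rcases (hμ0 t).eq_or_lt with h | h
    · simpa [← h] using hw t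
    · have := hmin t h
      rw [le_div_iff₀ h] at this
      linarith
  have hcard : (Finset.univ.filter fun t => w t - s * μ t ≠ 0).card < k := by
    rw [← hk]
    refine Finset.card_lt_card (Finset.ssubset_iff_of_subset ?_ |>.2 ⟨t₀, ?_, ?_⟩)
    · intro t
      simp only [Finset.mem_filter, Finset.mem_univ, true_and]
      intro h hwt
      exact h (by simp [hwt, hμJ t (by simp [hwt])])
    · simp only [Finset.mem_filter, Finset.mem_univ, true_and]
      intro h
      exact ht₀.ne' (hμJ t₀ (by simp [h]))
    · simp [hs, ht₀.ne']
  obtain ⟨v, hv0, hva, hvc, hvJ⟩ := ih _ hcard (fun t => w t - s * μ t) hnonneg rfl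
  refine ⟨v, hv0, hva.trans ?_, le_trans ?_ hvc, hvJ⟩
  · simp only [sub_smul, mul_smul, Finset.sum_sub_distrib, ← Finset.smul_sum, hμa, smul_zero,
      sub_zero]
  · have h := hc μ hμ0 hμa
    simp only [sub_mul, mul_assoc, Finset.sum_sub_distrib, ← Finset.mul_sum]
    nlinarith

/-- If `u'y ≤ -1`, then the norm of `y` is at least the inverse of the dual norm of `u`. -/
theorem inv_dualNorm_le {n : ℕ} (p : Seminorm ℝ (Fin n → ℝ)) (hp : ∀ x, p x = 0 → x = 0)
    {u y : Fin n → ℝ} (h : ∑ i, u i * y i ≤ -1) : (dualNorm p u)⁻¹ ≤ ENNReal.ofReal (p y) := by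
  have hy : y ≠ 0 := by
    rintro rfl
    simp at h
    linarith
  have hpy : 0 < p y := (apply_nonneg p y).lt_of_ne fun h => hy (hp y h.symm)
  rw [ENNReal.inv_le_iff_inv_le, ← ENNReal.ofReal_inv_of_pos hpy]
  refine le_trans ?_ (le_iSup₂ (f := fun (x : Fin n → ℝ) (_ : p x ≤ 1) =>
    ENNReal.ofReal |∑ i, u i * x i|) ((p y)⁻¹ • y) ?_)
  · refine ENNReal.ofReal_le_ofReal ?_
    have : ∑ i, u i * ((p y)⁻¹ • y) i = (p y)⁻¹ * ∑ i, u i * y i := by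
      rw [Finset.mul_sum]
      exact Finset.sum_congr rfl fun i _ => by simp only [Pi.smul_apply, smul_eq_mul]; ring
    rw [this, abs_mul, abs_of_pos (inv_pos.2 hpy)]
    exact le_mul_of_one_le_right (inv_pos.2 hpy).le (by rw [le_abs]; right; linarith)
  · rw [map_smul_eq_mul, norm_inv, Real.norm_of_nonneg hpy.le, inv_mul_cancel₀ hpy.ne']

/-- A linear functional on `ℝᵏ` is given by its values on the standard basis. -/
theorem map_eq_sum_mul_map_single {k : ℕ} (g : StrongDual ℝ (Fin k → ℝ)) (z : Fin k → ℝ) :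
    g z = ∑ i, z i * g (Pi.single i 1) := by
  conv_lhs => rw [pi_eq_sum_univ' z, map_sum]
  exact Finset.sum_congr rfl fun i _ => by
    rw [map_smul, smul_eq_mul]

/-- If `0` is not in the convex hull of finitely many vectors, some `y` makes all of them
at most `-1`. -/
theorem exists_forall_sum_le_neg_one {n m : ℕ} (a : Fin m → (Fin n → ℝ)) (J : Set (Fin m))
    (h0 : (0 : Fin n → ℝ) ∉ convexHull ℝ (a '' J)) :
    ∃ y : Fin n → ℝ, ∀ t ∈ J, ∑ i, a t i * y i ≤ -1 := by
  obtain ⟨g, γ, hg0, hg⟩ := geometric_hahn_banach_point_closed (convex_convexHull ℝ (a '' J))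
    ((J.toFinite.image a).isClosed_convexHull ℝ) h0
  rw [map_zero] at hg0
  refine ⟨fun i => -γ⁻¹ * g (Pi.single i 1), fun t ht => ?_⟩
  have h := hg _ (subset_convexHull ℝ _ (mem_image_of_mem a ht))
  have : ∑ i, a t i * (-γ⁻¹ * g (Pi.single i 1)) = -(γ⁻¹ * g (a t)) := by
    rw [map_eq_sum_mul_map_single g, Finset.mul_sum, ← Finset.sum_neg_distrib]
    exact Finset.sum_congr rfl fun i _ => by ring
  rw [this, neg_le_neg_iff, inv_mul_eq_div, one_le_div hg0]
  exact h.le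

/-- The residual of each inequality is at most the distance to the parameters that make the
point feasible. -/
theorem ofReal_residual_le_infEDist {n m : ℕ} (a : Fin m → (Fin n → ℝ)) (b : Fin m → ℝ)
    (x : Fin n → ℝ) (t : Fin m) :
    ENNReal.ofReal (∑ i, a t i * x i - b t) ≤
      Metric.infEDist b {b' : Fin m → ℝ | x ∈ feas a b'} := by
  refine Metric.le_infEDist.2 fun b' hb' => ?_
  refine le_trans ?_ (edist_le_pi_edist b b' t)
  rw [edist_comm, edist_dist, Real.dist_eq]
  refine ENNReal.ofReal_le_ofReal (le_trans ?_ (le_abs_self _))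
  have := hb' t
  linarith

/-- When all residuals at `x` are at most `1`, the parameters making `x` feasible are at distance
at most `1` from `b`. -/
theorem infEDist_le_one_of_residual_le {n m : ℕ} (a : Fin m → (Fin n → ℝ)) (b : Fin m → ℝ)
    (x : Fin n → ℝ) (h : ∀ t, ∑ i, a t i * x i - b t ≤ 1) :
    Metric.infEDist b {b' : Fin m → ℝ | x ∈ feas a b'} ≤ 1 := by
  refine (Metric.infEDist_le_edist_of_mem (y := fun t => b t + 1)
    fun t => by linarith [h t]).trans ?_
  refine edist_pi_le_iff.2 fun t => ?_
  simp [edist_dist]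

open scoped Pointwise in
/-- Theorem of the alternative: if the closed ball of radius `δ` around `x` misses the feasible
set, some nonnegative combination of the inequalities is violated on the whole ball. -/
theorem exists_weights_of_disjoint_closedBall {n m : ℕ} (a : Fin m → (Fin n → ℝ))
    (p : Seminorm ℝ (Fin n → ℝ)) (hp : ∀ x, p x = 0 → x = 0) (b : Fin m → ℝ) (x : Fin n → ℝ)
    (δ : ℝ) (hδ : 0 ≤ δ) (hdisj : Disjoint (p.closedBall x δ) (feas a b)) :
    ∃ w : Fin m → ℝ, (∀ t, 0 ≤ w t) ∧
      ∀ y ∈ p.closedBall x δ, ∑ t, w t * b t < ∑ t, w t * ∑ i, a t i * y i := by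
  have hx : x ∈ p.closedBall x δ := by simpa [Seminorm.mem_closedBall] using hδ
  let A : (Fin n → ℝ) →ₗ[ℝ] (Fin m → ℝ) := Matrix.mulVecLin (Matrix.of a)
  have hA : ∀ y t, A y t = ∑ i, a t i * y i := fun y t => rfl
  have hcl : IsClosed (A '' p.closedBall x δ + Ici 0) :=
    isClosed_Ici.add_left_of_isCompact ((p.isCompact_closedBall_of_eq_zero hp x δ).image
      A.continuous_of_finiteDimensional)
  have hconv : Convex ℝ (A '' p.closedBall x δ + Ici 0) :=
    ((p.convex_closedBall x δ).linear_image A).add (convex_Ici 0)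
  have hb : b ∉ A '' p.closedBall x δ + Ici 0 := by
    rintro ⟨_, ⟨y, hy, rfl⟩, s, hs, hys⟩
    refine Set.disjoint_left.1 hdisj hy fun t => ?_
    rw [← hys, ← hA]
    exact le_add_of_nonneg_right (hs t)
  obtain ⟨g, γ, hgb, hg⟩ := geometric_hahn_banach_point_closed hconv hcl hb
  have hsum : ∀ z : Fin m → ℝ, g z = ∑ t, g (Pi.single t 1) * z t := fun z => by
    simpa only [mul_comm] using map_eq_sum_mul_map_single g z
  refine ⟨fun t => g (Pi.single t 1), fun t => ?_, fun y hy => ?_⟩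
  · by_contra! hneg
    have key : ∀ r : ℝ, 0 ≤ r → γ < g (A x) + r * g (Pi.single t 1) := fun r hr => by
      have := hg _ (Set.add_mem_add (mem_image_of_mem A hx)
        (show r • (Pi.single t 1 : Fin m → ℝ) ∈ Ici 0 from
          mem_Ici.2 (smul_nonneg hr (Pi.single_nonneg.2 zero_le_one))))
      simpa using this
    have h0 := key 0 le_rfl
    have h1 := key ((γ - g (A x)) / g (Pi.single t 1)) (div_nonneg_of_nonpos (by linarith) hneg.le)
    rw [div_mul_cancel₀ _ hneg.ne] at h1
    linarith
  · have := hg _ (Set.add_mem_add (mem_image_of_mem A hy)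
      (show (0 : Fin m → ℝ) ∈ Ici 0 from self_mem_Ici))
    rw [add_zero, hsum] at this
    rw [hsum] at hgb
    exact hgb.trans this

/-- Pairing a combination of vectors with `y` is combining the pairings. -/
theorem sum_mul_pairing_eq {n m : ℕ} (a : Fin m → (Fin n → ℝ)) (μ : Fin m → ℝ)
    (y : Fin n → ℝ) :
    ∑ t, μ t * ∑ i, a t i * y i = ∑ i, (∑ t, μ t • a t) i * y i := by
  simp only [Finset.mul_sum, Finset.sum_apply, Pi.smul_apply, smul_eq_mul, Finset.sum_mul,
    mul_assoc]
  exact Finset.sum_comm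

/-- If the ball of radius `δ` around `x` misses the nonempty feasible set, some index set `J`
witnesses that `δ` is controlled by the distance from `b` to the parameters feasible at `x`. -/
theorem exists_index_set_of_disjoint_closedBall {n m : ℕ} (a : Fin m → (Fin n → ℝ))
    (p : Seminorm ℝ (Fin n → ℝ)) (hp : ∀ x, p x = 0 → x = 0) (b : Fin m → ℝ)
    (hne : (feas a b).Nonempty) (x : Fin n → ℝ) (δ : ℝ) (hδ : 0 ≤ δ)
    (hdisj : Disjoint (p.closedBall x δ) (feas a b)) :
    ∃ J : Set (Fin m), (0 : Fin n → ℝ) ∉ convexHull ℝ (a '' J) ∧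
      ENNReal.ofReal δ ≤ Metric.infEDist b {b' : Fin m → ℝ | x ∈ feas a b'} *
        (dualDist0 p (convexHull ℝ (a '' J)))⁻¹ := by
  classical
  obtain ⟨w, hw0, hw⟩ := exists_weights_of_disjoint_closedBall a p hp b x δ hδ hdisj
  set c : Fin m → ℝ := fun t => ∑ i, a t i * x i - b t with hcdef
  have hsum : ∀ μ : Fin m → ℝ,
      ∑ t, μ t * c t = ∑ i, (∑ t, μ t • a t) i * x i - ∑ t, μ t * b t := fun μ => by
    simp only [hcdef, mul_sub, Finset.sum_sub_distrib, sum_mul_pairing_eq]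
  have hc : ∀ μ : Fin m → ℝ, (∀ t, 0 ≤ μ t) → ∑ t, μ t • a t = 0 → ∑ t, μ t * c t ≤ 0 := by
    intro μ hμ0 hμa
    obtain ⟨x₀, hx₀⟩ := hne
    have h : ∑ t, μ t * ∑ i, a t i * x₀ i ≤ ∑ t, μ t * b t :=
      Finset.sum_le_sum fun t _ => mul_le_mul_of_nonneg_left (hx₀ t) (hμ0 t)
    rw [sum_mul_pairing_eq] at h
    rw [hsum]
    simp only [hμa, Pi.zero_apply, zero_mul, Finset.sum_const_zero] at h ⊢
    linarith
  obtain ⟨v, hv0, hva, hvc, hvJ⟩ := exists_weights_zero_notMem_convexHull a c hc w hw0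
  set e := ∑ t, v t • a t with he
  have hball : ∀ z, p z ≤ 1 → δ * |∑ i, e i * z i| < ∑ t, v t * c t := by
    intro z hz
    refine lt_of_lt_of_le ?_ hvc
    have key : ∀ ε : ℝ, |ε| = 1 → ε * (δ * ∑ i, e i * z i) < ∑ t, w t * c t := fun ε hε => by
      have h := hw (x - (ε * δ) • z) (by
        rw [Seminorm.mem_closedBall, sub_sub_cancel_left, map_neg_eq_map, map_smul_eq_mul,
          Real.norm_eq_abs, abs_mul, hε, one_mul, abs_of_nonneg hδ]
        exact mul_le_of_le_one_right hδ hz)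
      rw [sum_mul_pairing_eq, ← hva] at h
      rw [hsum, ← hva, lt_sub_comm]
      refine h.trans_eq ?_
      simp only [Pi.sub_apply, Pi.smul_apply, smul_eq_mul, mul_sub, Finset.sum_sub_distrib,
        Finset.mul_sum]
      congr 1
      exact Finset.sum_congr rfl fun i _ => by ring
    have h1 := key 1 (by simp)
    have h2 := key (-1) (by simp)
    rcases abs_cases (∑ i, e i * z i) with ⟨h, -⟩ | ⟨h, -⟩ <;> rw [h] <;> linarith
  have hpos : 0 < ∑ t, v t * c t := by simpa using hball 0 (by simp)
  set r := Metric.infEDist b {b' : Fin m → ℝ | x ∈ feas a b'} with hr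
  have hrtop : r ≠ ⊤ := Metric.infEDist_ne_top ⟨fun t => ∑ i, a t i * x i, fun t => le_rfl⟩
  have hcr : ∀ t, c t ≤ r.toReal := fun t =>
    (ENNReal.ofReal_le_iff_le_toReal hrtop).1 (ofReal_residual_le_infEDist a b x t)
  have hσr : ∑ t, v t * c t ≤ (∑ t, v t) * r.toReal := by
    rw [Finset.sum_mul]
    exact Finset.sum_le_sum fun t _ => mul_le_mul_of_nonneg_left (hcr t) (hv0 t)
  have hσ0 : 0 ≤ ∑ t, v t := Finset.sum_nonneg fun t _ => hv0 t
  have hσ : 0 < ∑ t, v t := hσ0.lt_of_ne fun h => by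
    rw [← h, zero_mul] at hσr
    linarith
  have hr0 : r ≠ 0 := fun h => by
    rw [h, ENNReal.toReal_zero, mul_zero] at hσr
    linarith
  have hmem : (∑ t, v t)⁻¹ • e ∈ convexHull ℝ (a '' {t | v t ≠ 0}) := by
    have h := (Finset.univ.filter fun t => v t ≠ 0).centerMass_mem_convexHull (w := v) (z := a)
      (s := a '' {t | v t ≠ 0}) (fun t _ => hv0 t) (by rwa [Finset.sum_filter_ne_zero])
      (fun t ht => mem_image_of_mem a (by simpa using ht))
    rwa [Finset.centerMass_filter_ne_zero, Finset.centerMass] at h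
  refine ⟨_, hvJ, ?_⟩
  rw [← div_eq_mul_inv, ENNReal.le_div_iff_mul_le (Or.inr hr0) (Or.inr hrtop)]
  refine (mul_le_mul_right (iInf₂_le _ hmem) _).trans ?_
  simp only [dualNorm, ENNReal.mul_iSup]
  refine iSup₂_le fun z hz => ?_
  rw [← ENNReal.ofReal_mul hδ, ENNReal.ofReal_le_iff_le_toReal hrtop]
  have hscale : ∑ i, ((∑ t, v t)⁻¹ • e) i * z i = (∑ t, v t)⁻¹ * ∑ i, e i * z i := by
    simp only [Pi.smul_apply, smul_eq_mul, Finset.mul_sum, mul_assoc]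
  rw [hscale, abs_mul, abs_of_pos (inv_pos.2 hσ), mul_left_comm, inv_mul_le_iff₀ hσ]
  exact (hball z hz).le.trans hσr


/-- Theorem `TH_PVZ_const`, formula (1). For a finite system indexed by
`T = {1,…,m}` (the parameter space `ℝᵐ` carries the max norm, which is the product metric
on `Fin m → ℝ`; `ℝⁿ` carries an arbitrary norm `p`), the global Hoffman constant
`Hof F = sup_{b ∈ dom F, x ∈ ℝⁿ} d(x, F(b)) / d(b, F⁻¹(x))` satisfies
`Hof F = max { d_*(0ₙ, conv{a_t : t ∈ J})⁻¹ : J ⊆ T, 0ₙ ∉ conv{a_t : t ∈ J} }`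
(conventions: `d(z,∅) = +∞`, `1/+∞ = 0`, `0/0 = 0`, `sup ∅ = 0`). -/
theorem global_hoffman_constant_finite
    {n m : ℕ} (a : Fin m → (Fin n → ℝ))
    (p : Seminorm ℝ (Fin n → ℝ)) (hp : ∀ x, p x = 0 → x = 0) :
    (⨆ (b : Fin m → ℝ) (_ : (feas a b).Nonempty) (x : Fin n → ℝ),
        pDist p x (feas a b) / infEdist b {b' : Fin m → ℝ | x ∈ feas a b'})
    =
    ⨆ (J : Set (Fin m)) (_ : (0 : Fin n → ℝ) ∉ convexHull ℝ (a '' J)),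
      (dualDist0 p (convexHull ℝ (a '' J)))⁻¹ := by
  refine le_antisymm ?_ ?_
  · refine iSup₂_le fun b hb => iSup_le fun x => ENNReal.div_le_of_le_mul' ?_
    refine ENNReal.le_of_forall_nnreal_lt fun δ hδ => ?_
    have hdisj : Disjoint (p.closedBall x δ) (feas a b) := by
      refine Set.disjoint_left.2 fun y hy hyF => hδ.not_ge ?_
      rw [Seminorm.mem_closedBall, map_sub_rev] at hy
      refine (iInf₂_le y hyF).trans ?_
      rw [← ENNReal.ofReal_coe_nnreal]
      exact ENNReal.ofReal_le_ofReal hy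
    obtain ⟨J, hJ, hle⟩ :=
      exists_index_set_of_disjoint_closedBall a p hp b hb x δ δ.coe_nonneg hdisj
    rw [ENNReal.ofReal_coe_nnreal] at hle
    exact hle.trans (mul_le_mul_right (le_iSup₂ (f := fun (J : Set (Fin m))
      (_ : (0 : Fin n → ℝ) ∉ convexHull ℝ (a '' J)) =>
        (dualDist0 p (convexHull ℝ (a '' J)))⁻¹) J hJ) _)
  · classical
    refine iSup₂_le fun J hJ => ?_
    obtain ⟨y, hy⟩ := exists_forall_sum_le_neg_one a J hJ
    set b : Fin m → ℝ := fun t => if t ∈ J then -1 else |∑ i, a t i * y i| with hb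
    have hyF : y ∈ feas a b := fun t => by
      by_cases ht : t ∈ J
      · simpa [hb, ht] using hy t ht
      · simpa [hb, ht] using le_abs_self _
    refine le_trans ?_ (le_iSup₂_of_le b ⟨y, hyF⟩ (le_iSup (fun x : Fin n → ℝ =>
      pDist p x (feas a b) / Metric.infEDist b {b' : Fin m → ℝ | x ∈ feas a b'}) 0))
    have hdist : Metric.infEDist b {b' : Fin m → ℝ | (0 : Fin n → ℝ) ∈ feas a b'} ≤ 1 := by
      refine infEDist_le_one_of_residual_le a b 0 fun t => ?_
      by_cases ht : t ∈ J
      · simp [hb, ht]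
      · simp only [hb, ht, Pi.zero_apply, mul_zero, Finset.sum_const_zero, if_false]
        linarith [abs_nonneg (∑ i, a t i * y i)]
    refine le_trans ?_ (ENNReal.div_le_div_left hdist _)
    rw [div_one]
    refine le_iInf₂ fun z hz => ?_
    simp only [dualDist0, ENNReal.inv_iInf]
    refine iSup₂_le fun u hu => ?_
    rw [zero_sub, map_neg_eq_map]
    refine inv_dualNorm_le p hp ?_
    obtain ⟨μ, hμ0, hμJ, hμ1, rfl⟩ := exists_weights_of_mem_convexHull_image a J hu
    rw [← sum_mul_pairing_eq]
    calc ∑ t, μ t * ∑ i, a t i * z i ≤ ∑ t, μ t * -1 := by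
          refine Finset.sum_le_sum fun t _ => ?_
          by_cases ht : t ∈ J
          · exact mul_le_mul_of_nonneg_left (by simpa [hb, ht] using hz t) (hμ0 t)
          · simp [hμJ t ht]
      _ = -1 := by rw [← Finset.sum_mul, hμ1, one_mul]
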